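/- Let C be a cycle graph whose vertex set is partitioned into three nonempty sets V₁, V₂, V₃, each of which induces a path in C (i.e., V₁, V₂, V₃ are three consecutive arcs of the cycle). Let Ĉ be a graph obtained from C by adding a nonempty set S of new vertices, disjoint from V(C), such that S is an independent set in Ĉ and every vertex of S is adjacent in Ĉ to exactly three vertices of C, one in each of V₁, V₂ and V₃. For every vertex v ∈ V(C) of degree 2 in Ĉ, let P(v) be the unique path in C containing v whose two endpoints have degree 3 in Ĉ and all of whose remaining vertices have degree 2 in Ĉ. Then every graph C̃ obtained from Ĉ by adding, for each vertex v ∈ V(C) of degree 2 in Ĉ, an edge joining v to some vertex of V(Ĉ) ∖ V(P(v)), is 3-connected. -/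

import Mathlib

open Finset SimpleGraph
open scoped Classical

noncomputable section

/-- A graph `G` is `d`-connected if it has at least `d + 1` vertices and removing any
set of at most `d − 1` vertices leaves a connected graph. -/
def IsKConnected {V : Type*} [Fintype V] (d : ℕ) (G : SimpleGraph V) : Prop :=
  d + 1 ≤ Fintype.card V ∧
    ∀ S : Finset V, S.card ≤ d - 1 → (G.induce ((↑S : Set V)ᶜ)).Connected

/-- `G` is a path graph: some Hamiltonian path uses every edge of `G`. -/
def IsPathGraph {V : Type*} (G : SimpleGraph V) : Prop :=
  ∃ (u v : V) (w : G.Walk u v), w.IsHamiltonian ∧ ∀ e ∈ G.edgeSet, e ∈ w.edges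

/-- `G` is a cycle graph: some Hamiltonian cycle uses every edge of `G`. -/
def IsCycleGraph {V : Type*} (G : SimpleGraph V) : Prop :=
  ∃ (u : V) (w : G.Walk u u), w.IsHamiltonianCycle ∧ ∀ e ∈ G.edgeSet, e ∈ w.edges

/-- A cutset of `G` is a set of vertices whose removal disconnects the graph. -/
def IsCutset {V : Type*} [Fintype V] [DecidableEq V] (G : SimpleGraph V) (U : Finset V) :
    Prop :=
  ¬ (G.induce ((↑U : Set V)ᶜ)).Connected

/-!
Remove a set `T` of at most two vertices. One of the three arcs, `K`, avoids `T`, and every vertex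
off the cycle is adjacent to it. So a nonempty union `F` of components of `C̃ - T` that misses `K`
lies on the cycle, where `T` separates it from `K`. Since a cycle is `2`-connected, `T` consists of
two vertices of the cycle, each adjacent to every part into which `T` cuts the cycle; since its
vertices have degree `2` in the cycle, there are only two such parts. Hence `F` is a single arc with
ends adjacent to `T`, all its vertices have degree `2` in `Ĉ`, and `F ∪ T ⊆ P(v)` for every
`v ∈ F`. The new edge at `v` then leaves `F ∪ T`, which is impossible.
-/

section Fragment

variable {V W : Type*} {G H : SimpleGraph V} {T F P K : Set V}

/-- A `T`-fragment of `G`: a union of components of `G - T` which is neither empty nor all of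
`G - T`. Its existence witnesses that `T` separates `G`. -/
structure IsFragment (G : SimpleGraph V) (T F : Set V) : Prop where
  nonempty : F.Nonempty
  compl_nonempty : (F ∪ T)ᶜ.Nonempty
  disjoint : Disjoint F T
  mem_of_adj : ∀ ⦃a⦄, a ∈ F → ∀ ⦃b⦄, G.Adj a b → b ∈ F ∪ T

namespace IsFragment

theorem anti (hF : IsFragment G T F) (hle : H ≤ G) : IsFragment H T F :=
  { hF with mem_of_adj := fun _ ha _ hab => hF.mem_of_adj ha (hle hab) }

theorem compl (hF : IsFragment G T F) : IsFragment G T (F ∪ T)ᶜ where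
  nonempty := hF.compl_nonempty
  compl_nonempty := hF.nonempty.mono fun a ha =>
    not_or.2 ⟨not_not.2 (.inl ha), Set.disjoint_left.1 hF.disjoint ha⟩
  disjoint := Set.disjoint_left.2 fun _ ha haT => ha (.inr haT)
  mem_of_adj a ha b hab := by
    by_contra hb
    obtain ⟨hbFT, hbT⟩ := not_or.1 hb
    exact ha (hF.mem_of_adj ((not_not.1 hbFT).resolve_right hbT) hab.symm)

theorem inter (hF : IsFragment G T F) (hne : (F ∩ P).Nonempty)
    (hP : ∀ a ∈ F, a ∈ P → ∀ b ∈ F, G.Adj a b → b ∈ P) : IsFragment G T (F ∩ P) where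
  nonempty := hne
  compl_nonempty := hF.compl_nonempty.mono
    (Set.compl_subset_compl.2 (Set.union_subset_union_left T Set.inter_subset_left))
  disjoint := hF.disjoint.mono_left Set.inter_subset_left
  mem_of_adj a ha b hab := (hF.mem_of_adj ha.1 hab).imp_left fun hb => ⟨hb, hP a ha.1 ha.2 b hb hab⟩

theorem comap (hF : IsFragment G T F) (f : W → V) (hne : (f ⁻¹' F).Nonempty)
    (hne' : (f ⁻¹' (F ∪ T)ᶜ).Nonempty) : IsFragment (G.comap f) (f ⁻¹' T) (f ⁻¹' F) where
  nonempty := hne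
  compl_nonempty := hne'
  disjoint := hF.disjoint.preimage f
  mem_of_adj _ ha _ hab := hF.mem_of_adj ha hab

end IsFragment

theorem subset_of_preconnected_induce (hK : (G.induce K).Preconnected) (hne : (K ∩ F).Nonempty)
    (hF : ∀ a ∈ F, ∀ b ∈ K, G.Adj a b → b ∈ F) : K ⊆ F := by
  obtain ⟨x, hxK, hxF⟩ := hne
  intro y hyK
  by_contra hyF
  obtain ⟨p⟩ := hK ⟨x, hxK⟩ ⟨y, hyK⟩
  obtain ⟨d, -, hd, hd'⟩ := p.exists_boundary_dart (Subtype.val ⁻¹' F) hxF hyF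
  exact hd' (hF _ hd _ d.snd.2 d.adj)

theorem preconnected_induce_compl_iff :
    (G.induce Tᶜ).Preconnected ↔ ∀ F, ¬ IsFragment G T F := by
  constructor
  · intro hG F hF
    obtain ⟨x, hx⟩ := hF.nonempty
    obtain ⟨y, hy⟩ := hF.compl_nonempty
    refine hy (.inl (subset_of_preconnected_induce hG
      ⟨x, Set.disjoint_left.1 hF.disjoint hx, hx⟩ ?_ fun hyT => hy (.inr hyT)))
    exact fun a ha b hb hab => (hF.mem_of_adj ha hab).resolve_right hb
  · intro hG x y
    by_contra hxy
    refine hG (Subtype.val '' ((G.induce Tᶜ).connectedComponentMk x).supp)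
      ⟨⟨x, x, rfl, rfl⟩, ⟨y, ?_⟩, ?_, ?_⟩
    · rintro (⟨z, hz, hzy⟩ | hyT)
      · rw [← Subtype.ext hzy] at hxy
        exact hxy (ConnectedComponent.exact hz).symm
      · exact y.2 hyT
    · exact Set.disjoint_left.2 fun _ ⟨z, _, hz⟩ haT => z.2 (hz ▸ haT)
    · rintro _ ⟨z, hz, rfl⟩ b hzb
      by_cases hb : b ∈ T
      · exact .inr hb
      · refine .inl ⟨⟨b, hb⟩, ?_, rfl⟩
        have hbz : (G.induce Tᶜ).Adj ⟨b, hb⟩ z := hzb.symm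
        exact (ConnectedComponent.sound hbz.reachable).trans hz

theorem connected_induce_compl_of_forall_not_isFragment (hK : (G.induce K).Connected)
    (hKT : Disjoint K T) (hG : ∀ F, Disjoint F K → ¬ IsFragment G T F) :
    (G.induce Tᶜ).Connected := by
  obtain ⟨k, hk⟩ := hK.nonempty
  have : Nonempty ↥Tᶜ := ⟨k, Set.disjoint_left.1 hKT hk⟩
  refine ⟨preconnected_induce_compl_iff.2 fun F hF => ?_⟩
  by_cases hne : (K ∩ F).Nonempty
  · have hKF : K ⊆ F := subset_of_preconnected_induce hK.preconnected hne fun a ha b hb hab =>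
      (hF.mem_of_adj ha hab).resolve_right (Set.disjoint_left.1 hKT hb)
    have hKc : Disjoint (F ∪ T)ᶜ K :=
      Set.disjoint_compl_left_iff_subset.2 (hKF.trans Set.subset_union_left)
    exact hG _ hKc hF.compl
  · exact hG F (Set.disjoint_iff_inter_eq_empty.2 (Set.not_nonempty_iff_eq_empty.1 hne)).symm hF

end Fragment

section KConnected

variable {V : Type*} [Fintype V] {G : SimpleGraph V} {d : ℕ} {T : Finset V} {F : Set V}

theorem IsKConnected.le_card_of_isFragment (hG : IsKConnected d G) (hF : IsFragment G T F) :
    d ≤ #T := by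
  by_contra! hT
  exact preconnected_induce_compl_iff.1 (hG.2 T (by omega)).preconnected F hF

theorem IsKConnected.exists_adj_of_isFragment (hG : IsKConnected d G) (hT : #T ≤ d)
    (hF : IsFragment G T F) {t : V} (ht : t ∈ T) : ∃ a ∈ F, G.Adj t a := by
  by_contra! hadj
  have hF' : IsFragment G (T.erase t) F :=
    { nonempty := hF.nonempty
      compl_nonempty := hF.compl_nonempty.mono
        (Set.compl_subset_compl.2 (Set.union_subset_union_right F (by simp)))
      disjoint := hF.disjoint.mono_right (by simp)
      mem_of_adj := fun a ha b hab => (hF.mem_of_adj ha hab).imp_right fun hb =>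
        mem_coe.2 (mem_erase.2 ⟨by rintro rfl; exact hadj a ha hab.symm, hb⟩) }
  have := hG.le_card_of_isFragment hF'
  have := card_erase_lt_of_mem ht
  omega

theorem IsKConnected.two_lt_degree_of_isFragment (hG : IsKConnected d G) (hT : #T ≤ d)
    {A B C : Set V} (hA : IsFragment G T A) (hB : IsFragment G T B) (hC : IsFragment G T C)
    (hAB : Disjoint A B) (hAC : Disjoint A C) (hBC : Disjoint B C) {t : V} (ht : t ∈ T) :
    2 < G.degree t := by
  obtain ⟨a, ha, hta⟩ := hG.exists_adj_of_isFragment hT hA ht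
  obtain ⟨b, hb, htb⟩ := hG.exists_adj_of_isFragment hT hB ht
  obtain ⟨c, hc, htc⟩ := hG.exists_adj_of_isFragment hT hC ht
  rw [← card_neighborFinset_eq_degree, two_lt_card]
  simp only [mem_neighborFinset]
  exact ⟨a, hta, b, htb, c, htc, hAB.ne_of_mem ha hb, hAC.ne_of_mem ha hc, hBC.ne_of_mem hb hc⟩

end KConnected

section Cycle

variable {V : Type*} {G : SimpleGraph V}

theorem IsPathGraph.connected (hG : IsPathGraph G) : G.Connected := by
  obtain ⟨u, v, p, hp, -⟩ := hG
  rw [← (induceUnivIso G).connected_iff, ← hp.setOfPred_support]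
  exact p.connected_induce_support

theorem connected_induce_compl_singleton_of_isHamiltonian {u v : V} {p : G.Walk u v}
    (hp : p.IsHamiltonian) (hnil : ¬ p.Nil) : (G.induce {u}ᶜ).Connected := by
  have hsupp : {x | x ∈ p.tail.support} = {u}ᶜ := by
    have hnodup := hp.isPath.support_nodup
    rw [← p.cons_support_tail hnil, List.nodup_cons] at hnodup
    ext x
    refine ⟨fun hx hxu => hnodup.1 (hxu ▸ hx), fun hxu => ?_⟩
    have hx := hp.mem_support x
    rw [← p.cons_support_tail hnil] at hx
    exact (List.mem_cons.1 hx).resolve_left hxu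
  exact hsupp ▸ p.tail.connected_induce_support

theorem IsCycleGraph.finite (hG : IsCycleGraph G) : Finite V :=
  let ⟨_, _, hw, _⟩ := hG
  hw.finite

theorem IsCycleGraph.connected_induce_compl_singleton (hG : IsCycleGraph G) (t : V) :
    (G.induce {t}ᶜ).Connected := by
  obtain ⟨u, w, hw, -⟩ := hG
  have hc := (Walk.isHamiltonianCycle_rotate (hw.mem_support t)).2 hw
  refine connected_induce_compl_singleton_of_isHamiltonian
    (p := (w.rotate t (hw.mem_support t)).tail.reverse) (fun x => ?_) ?_
  · rw [Walk.support_reverse, List.count_reverse, hc.isHamiltonian_tail]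
  · have := hc.isCycle.three_le_length
    have := Walk.length_tail_add_one hc.isCycle.not_nil
    rw [Walk.nil_reverse, ← Walk.length_eq_zero_iff]
    omega

theorem IsCycleGraph.isKConnected_two [Fintype V] (hG : IsCycleGraph G) : IsKConnected 2 G := by
  obtain ⟨u, w, hw, -⟩ := id hG
  refine ⟨hw.length_eq ▸ hw.isCycle.three_le_length, fun S hS => ?_⟩
  rcases Nat.le_one_iff_eq_zero_or_eq_one.1 hS with hS | hS
  · rw [card_eq_zero.1 hS, coe_empty, Set.compl_empty, (induceUnivIso G).connected_iff]
    exact SimpleGraph.IsHamiltonian.connected fun _ => ⟨u, w, hw⟩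
  · obtain ⟨t, rfl⟩ := card_eq_one.1 hS
    rw [coe_singleton]
    exact hG.connected_induce_compl_singleton t

theorem IsCycleGraph.degree_eq_two [Fintype V] (hG : IsCycleGraph G) (v : V) : G.degree v = 2 := by
  obtain ⟨u, w, hw, hedge⟩ := hG
  rw [← hw.isCycle.ncard_neighborSet_toSubgraph_eq_two (hw.mem_support v),
    ← card_neighborSet_eq_degree, ← Nat.card_eq_fintype_card, Nat.card_coe_set_eq]
  congr 1
  ext b
  simp only [mem_neighborSet, Subgraph.mem_neighborSet, Walk.adj_toSubgraph_iff_mem_edges]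
  exact ⟨fun h => hedge _ h, fun h => w.edges_subset_edgeSet h⟩

theorem IsCycleGraph.union_subset_of_isFragment (hG : IsCycleGraph G) {T : Finset V} (hT : #T ≤ 2)
    {F P : Set V} (hF : IsFragment G T F) (hne : (F ∩ P).Nonempty)
    (hP : ∀ a ∈ F, a ∈ P → ∀ b, G.Adj a b → b ∈ P) : F ∪ T ⊆ P := by
  have := hG.finite
  have := Fintype.ofFinite V
  have hG2 := hG.isKConnected_two
  have hFP : IsFragment G T (F ∩ P) := hF.inter hne fun a ha haP b _ hab => hP a ha haP b hab
  have hTP : (T : Set V) ⊆ P := fun t ht => by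
    obtain ⟨a, ha, hta⟩ := hG2.exists_adj_of_isFragment hT hFP ht
    exact hP a ha.1 ha.2 t hta.symm
  refine Set.union_subset (fun b hb => ?_) hTP
  by_contra hbP
  have hFP' : IsFragment G T (F ∩ Pᶜ) := hF.inter ⟨b, hb, hbP⟩
    fun a _ haP c hc hac hcP => haP (hP c hc hcP a hac.symm)
  obtain ⟨t, ht⟩ : T.Nonempty := card_pos.1 (by have := hG2.le_card_of_isFragment hF; omega)
  have hFF : Disjoint F (F ∪ T)ᶜ := disjoint_compl_right.mono_right
    (Set.compl_subset_compl.2 Set.subset_union_left)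
  have h3 := hG2.two_lt_degree_of_isFragment hT hFP hFP' hF.compl
    (disjoint_compl_right.mono Set.inter_subset_right Set.inter_subset_right)
    (hFF.mono_left Set.inter_subset_left) (hFF.mono_left Set.inter_subset_left) ht
  have := hG.degree_eq_two t
  omega

end Cycle

section Rim

variable {V : Type*} {G : SimpleGraph V} {C F : Set V} {T : Finset V}

theorem IsFragment.subset_of_forall_exists_adj {K : Set V} (hF : IsFragment G T F)
    (hFK : Disjoint F K) (hKT : Disjoint K T) (hadj : ∀ s ∉ C, ∃ u ∈ K, G.Adj s u) : F ⊆ C := by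
  intro s hs
  by_contra hsC
  obtain ⟨u, huK, hsu⟩ := hadj s hsC
  rcases hF.mem_of_adj hs hsu with huF | huT
  · exact Set.disjoint_left.1 hFK huF huK
  · exact Set.disjoint_left.1 hKT huK huT

theorem IsFragment.induce_subtype (hF : IsFragment G T F) (hne : (F ∩ C).Nonempty)
    (hne' : ((F ∪ T)ᶜ ∩ C).Nonempty) :
    IsFragment (G.induce C) (T.subtype (· ∈ C)) (Subtype.val ⁻¹' F) := by
  have hT : (T.subtype (· ∈ C) : Set C) = Subtype.val ⁻¹' (T : Set V) := by ext; simp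
  obtain ⟨x, hxF, hxC⟩ := hne
  obtain ⟨y, hyF, hyC⟩ := hne'
  exact hT ▸ hF.comap Subtype.val ⟨⟨x, hxC⟩, hxF⟩ ⟨⟨y, hyC⟩, hyF⟩

theorem IsFragment.coe_subset_of_isKConnected_induce [Fintype C] {d : ℕ}
    (hC : IsKConnected d (G.induce C))
    (hF : IsFragment G T F) (hne : (F ∩ C).Nonempty) (hne' : ((F ∪ T)ᶜ ∩ C).Nonempty)
    (hT : #T ≤ d) : (T : Set V) ⊆ C := by
  have hd := hC.le_card_of_isFragment (hF.induce_subtype hne hne')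
  rw [card_subtype] at hd
  exact fun t ht => card_filter_eq_iff.1 ((card_filter_le T _).antisymm (hT.trans hd)) t ht

theorem IsFragment.degree_eq_two [Fintype V] (hC : IsCycleGraph (G.induce C)) (hT : #T ≤ 2)
    (hF : IsFragment G T F) (hFC : F ⊆ C) (hne : ((F ∪ T)ᶜ ∩ C).Nonempty) {v : V} (hv : v ∈ F) :
    G.degree v = 2 := by
  have hTC : (T : Set V) ⊆ C := hF.coe_subset_of_isKConnected_induce hC.isKConnected_two
    (hF.nonempty.mono fun _ ha => ⟨ha, hFC ha⟩) hne hT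
  have hnbr : G.neighborSet v ⊆ C := fun _ hb => Set.union_subset hFC hTC (hF.mem_of_adj hv hb)
  rw [← hC.degree_eq_two ⟨v, hFC hv⟩]
  exact (degree_induce_of_neighborSet_subset (v := ⟨v, hFC hv⟩) hnbr).symm

theorem IsFragment.union_subset (hC : IsCycleGraph (G.induce C)) (hT : #T ≤ 2)
    (hF : IsFragment G T F) (hFC : F ⊆ C) (hne : ((F ∪ T)ᶜ ∩ C).Nonempty) {P : Set V}
    (hFP : (F ∩ P).Nonempty) (hP : ∀ a ∈ F, a ∈ P → ∀ b, G.Adj a b → b ∈ P) : F ∪ T ⊆ P := by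
  have := hC.finite
  have := Fintype.ofFinite C
  have hneF : (F ∩ C).Nonempty := hF.nonempty.mono fun _ ha => ⟨ha, hFC ha⟩
  have hTC : (T : Set V) ⊆ C :=
    hF.coe_subset_of_isKConnected_induce hC.isKConnected_two hneF hne hT
  have hT' : #(T.subtype (· ∈ C)) ≤ 2 := by
    rw [card_subtype]
    exact (card_filter_le T _).trans hT
  obtain ⟨x, hxF, hxP⟩ := hFP
  have hsub := hC.union_subset_of_isFragment hT' (hF.induce_subtype hneF hne)
    (P := Subtype.val ⁻¹' P) ⟨⟨x, hFC hxF⟩, hxF, hxP⟩ fun a ha haP b hab => hP a ha haP b hab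
  rintro a (ha | ha)
  · exact @hsub ⟨a, hFC ha⟩ (.inl ha)
  · exact @hsub ⟨a, hTC ha⟩ (.inr (by simpa using ha))

end Rim

theorem exists_disjoint_of_card_lt {ι V : Type*} [Fintype ι] {A : ι → Set V}
    (hA : Pairwise (Function.onFun Disjoint A)) {T : Finset V} (hT : #T < Fintype.card ι) :
    ∃ i, Disjoint (A i) T := by
  by_contra! hmeet
  choose f hfA hfT using fun i => Set.not_disjoint_iff.1 (hmeet i)
  obtain ⟨i, -, j, -, hij, hf⟩ := exists_ne_map_eq_of_card_lt_of_maps_to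
    (by rwa [card_univ]) (fun i _ => hfT i)
  exact Set.disjoint_left.1 (hA hij) (hfA i) (hf ▸ hfA j)

theorem mem_of_card_filter_univ_le {V : Type*} [Fintype V] {p : V → Prop} {s : Finset V}
    (hs : #{w | p w} ≤ #{w ∈ s | p w}) {b : V} (hb : p b) : b ∈ s := by
  have heq : s.filter p = univ.filter p :=
    eq_of_subset_of_card_le (filter_subset_filter p (subset_univ s)) hs
  exact mem_of_mem_filter b (heq ▸ (mem_filter_univ b).2 hb)

theorem statement13_general {ι V : Type*} [Fintype ι] [Fintype V] (Chat : SimpleGraph V)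
    (C : Set V) (A : ι → Set V)
    (hι : 2 < Fintype.card ι)
    (hCne : C ≠ Set.univ)
    (hcycle : IsCycleGraph (Chat.induce C))
    (hAC : ∀ i, A i ⊆ C)
    (hdisj : Pairwise (Function.onFun Disjoint A))
    (hconn : ∀ i, (Chat.induce (A i)).Connected)
    (hadj : ∀ s ∉ C, ∀ i, ∃ u ∈ A i, Chat.Adj s u)
    (P : V → Finset V)
    (hP : ∀ v ∈ C, #{w | Chat.Adj v w} = 2 →
        v ∈ P v ∧ ∀ u ∈ P v, #{w ∈ P v | Chat.Adj u w} ≤ 1 → #{w | Chat.Adj u w} ≠ 2)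
    (Ctil : SimpleGraph V)
    (hle : Chat ≤ Ctil)
    (hnew : ∀ v ∈ C, #{w | Chat.Adj v w} = 2 → ∃ u, u ∉ P v ∧ Ctil.Adj v u) :
    IsKConnected 3 Ctil := by
  have hcard : 3 < Fintype.card V :=
    hcycle.isKConnected_two.1.trans_lt
      (by simpa using Set.card_lt_card (Set.ssubset_univ_iff.2 hCne))
  refine ⟨hcard, fun T hT => ?_⟩
  obtain ⟨i, hiT⟩ := exists_disjoint_of_card_lt hdisj (hT.trans_lt hι)
  refine connected_induce_compl_of_forall_not_isFragment
    ((hconn i).mono (comap_monotone _ hle)) hiT fun F hFi hF => ?_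
  have hFC : F ⊆ C := (hF.anti hle).subset_of_forall_exists_adj hFi hiT fun s hs => hadj s hs i
  have hrest : ((F ∪ T)ᶜ ∩ C).Nonempty := by
    obtain ⟨k, hk⟩ := (hconn i).nonempty
    exact ⟨k, not_or.2 ⟨Set.disjoint_right.1 hFi hk, Set.disjoint_left.1 hiT hk⟩, hAC i hk⟩
  have hdeg : ∀ a ∈ F, #{w | Chat.Adj a w} = 2 := fun a ha => by
    rw [← neighborFinset_eq_filter]
    exact (hF.anti hle).degree_eq_two hcycle hT hFC hrest ha
  obtain ⟨v, hv⟩ := hF.nonempty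
  obtain ⟨hvP, hPend⟩ := hP v (hFC hv) (hdeg v hv)
  have hclosed : ∀ a ∈ F, a ∈ P v → ∀ b, Chat.Adj a b → b ∈ P v := fun a ha haP b hab => by
    have htwo : 1 < #{w ∈ P v | Chat.Adj a w} := not_le.1 fun h => hPend a haP h (hdeg a ha)
    exact mem_of_card_filter_univ_le (by rwa [hdeg a ha]) hab
  have hsub : F ∪ T ⊆ P v := (hF.anti hle).union_subset hcycle hT hFC hrest ⟨v, hv, hvP⟩ hclosed
  obtain ⟨u, huP, hvu⟩ := hnew v (hFC hv) (hdeg v hv)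
  exact huP (hsub (hF.mem_of_adj hv hvu))

/-- With `C`, `V₁`, `V₂`, `V₃`, `S` and `Ĉ` (here `Chat`) as in the setup of
Statement 12, but with `S` nonempty, for each vertex `v ∈ V(C)` of degree `2` in `Ĉ` let
`P v` be the (unique) path in `C` containing `v` whose endpoints have degree `3` in `Ĉ`
and whose remaining vertices have degree `2` in `Ĉ` (characterised below by `hP`:
endpoints are the vertices with at most one neighbour inside `P v`).  Then every graph
`C̃` (here `Ctil`) obtained from `Ĉ` by adding, for each vertex `v ∈ V(C)` of degree `2`
in `Ĉ`, an edge joining `v` to some vertex outside `P v`, is `3`-connected. -/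
theorem statement13 {V : Type*} [Fintype V] [DecidableEq V]
    (Chat : SimpleGraph V) (S V₁ V₂ V₃ : Finset V)
    (hSne : S.Nonempty)
    (hpart : V₁ ∪ V₂ ∪ V₃ = Sᶜ)
    (h12 : Disjoint V₁ V₂) (h13 : Disjoint V₁ V₃) (h23 : Disjoint V₂ V₃)
    (hne1 : V₁.Nonempty) (hne2 : V₂.Nonempty) (hne3 : V₃.Nonempty)
    (hcycle : IsCycleGraph (Chat.induce ((↑(Sᶜ) : Set V))))
    (hpath1 : IsPathGraph (Chat.induce (↑V₁ : Set V)))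
    (hpath2 : IsPathGraph (Chat.induce (↑V₂ : Set V)))
    (hpath3 : IsPathGraph (Chat.induce (↑V₃ : Set V)))
    (hind : ∀ u ∈ S, ∀ v ∈ S, ¬ Chat.Adj u v)
    (hadj : ∀ x ∈ S, (V₁.filter (fun u => Chat.Adj x u)).card = 1 ∧
        (V₂.filter (fun u => Chat.Adj x u)).card = 1 ∧
        (V₃.filter (fun u => Chat.Adj x u)).card = 1)
    (P : V → Finset V)
    (hP : ∀ v ∈ Sᶜ, (Finset.univ.filter (fun w => Chat.Adj v w)).card = 2 →
        v ∈ P v ∧ P v ⊆ Sᶜ ∧ IsPathGraph (Chat.induce (↑(P v) : Set V)) ∧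
        (∀ u ∈ P v, ((P v).filter (fun w => Chat.Adj u w)).card ≤ 1 →
          (Finset.univ.filter (fun w => Chat.Adj u w)).card = 3) ∧
        (∀ u ∈ P v, 2 ≤ ((P v).filter (fun w => Chat.Adj u w)).card →
          (Finset.univ.filter (fun w => Chat.Adj u w)).card = 2))
    (Ctil : SimpleGraph V)
    (hle : Chat ≤ Ctil)
    (hnew : ∀ v ∈ Sᶜ, (Finset.univ.filter (fun w => Chat.Adj v w)).card = 2 →
        ∃ u, u ∉ P v ∧ Ctil.Adj v u)
    (honly : ∀ a b, Ctil.Adj a b → ¬ Chat.Adj a b →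
        (a ∈ Sᶜ ∧ (Finset.univ.filter (fun w => Chat.Adj a w)).card = 2 ∧ b ∉ P a) ∨
        (b ∈ Sᶜ ∧ (Finset.univ.filter (fun w => Chat.Adj b w)).card = 2 ∧ a ∉ P b)) :
    IsKConnected 3 Ctil := by
  have hsub : (V₁ ⊆ Sᶜ ∧ V₂ ⊆ Sᶜ) ∧ V₃ ⊆ Sᶜ := by
    rw [← union_subset_iff, ← union_subset_iff, hpart]
  have hexists {W : Finset V} {x : V} (h : #{u ∈ W | Chat.Adj x u} = 1) : ∃ u ∈ W, Chat.Adj x u :=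
    filter_nonempty_iff.1 (card_pos.1 (h ▸ one_pos))
  refine statement13_general Chat ↑Sᶜ ![↑V₁, ↑V₂, ↑V₃] (by simp) (by simpa using hSne.ne_empty)
    hcycle ?_ ?_ ?_ (fun s hs => ?_) P (fun v hv hdeg => ?_) Ctil hle hnew
  · simpa [Fin.forall_fin_succ, and_assoc, -coe_compl] using hsub
  · simp [Pairwise, Fin.forall_fin_succ, Function.onFun, h12, h13, h23, h12.symm, h13.symm,
      h23.symm]
  · simpa [Fin.forall_fin_succ] using ⟨hpath1.connected, hpath2.connected, hpath3.connected⟩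
  · obtain ⟨h1, h2, h3⟩ := hadj s (by simpa using hs)
    simpa [Fin.forall_fin_succ] using ⟨hexists h1, hexists h2, hexists h3⟩
  · obtain ⟨hvP, -, -, hend, -⟩ := hP v hv hdeg
    exact ⟨hvP, fun u hu hle1 => by simp [hend u hu hle1]⟩

end
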